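/- Every Sp(n)-equivariant linear map φ : (ℝⁿ)^{⊗k} → (ℝⁿ)^{⊗l} is an ℝ-linear combination of the maps F_β, where β ranges over all perfect matchings of [l+k]; equivalently, the linear map from the free ℝ-vector space on perfect matchings of [l+k] to Hom_{Sp(n)}((ℝⁿ)^{⊗k}, (ℝⁿ)^{⊗l}) sending β to F_β is surjective. -/

import Mathlib

open Classical
noncomputable section

/-- The `k`-th tensor (Kronecker) power of an `n × n` real matrix. -/
def tensorPow (n k : ℕ) (g : Matrix (Fin n) (Fin n) ℝ) :
    Matrix (Fin k → Fin n) (Fin k → Fin n) ℝ :=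
  Matrix.of fun I J => ∏ i, g (I i) (J i)

/-- The Gram matrix `ε` of the standard symplectic form `Ω` on `ℝ^{2m}`, in the basis
ordered `1, 1′, …, m, m′`. -/
def eps (m : ℕ) : Matrix (Fin (2 * m)) (Fin (2 * m)) ℝ :=
  Matrix.of fun i j =>
    if i.val + 1 = j.val ∧ i.val % 2 = 0 then (1 : ℝ)
    else if j.val + 1 = i.val ∧ j.val % 2 = 0 then (-1 : ℝ) else 0

/-- The matrix `F_β : (ℝⁿ)^{⊗k} → (ℝⁿ)^{⊗l}` (`n = 2m`) associated to a perfect matching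
`β` of `[l+k]` encoded by an involution `f`. -/
def Fmat (m l k : ℕ) (f : Fin (l + k) → Fin (l + k)) :
    Matrix (Fin l → Fin (2 * m)) (Fin k → Fin (2 * m)) ℝ :=
  Matrix.of fun I J =>
    ∏ x ∈ Finset.univ.filter (fun x => x < f x),
      (if ((x : Fin (l + k)).val < l ↔ (f x).val < l)
        then eps m (Fin.append I J x) (Fin.append I J (f x))
        else (if Fin.append I J x = Fin.append I J (f x) then (1 : ℝ) else 0))

/-!
Lowering the `k` inputs of an equivariant map with `ε` turns it into an `Sp`-invariant tensor `T`
on `l + k` factors, and differentiating along `t ↦ exp (tX)` shows that `T` is annihilated by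
`sp = {X | Xᵀ ε + ε X = 0}`.

Let `C = ∑ D(E_ca) D(E_ac)` be the Casimir operator of `gl`, where `D` is the derivation action on
the tensors with a nonempty set of `N` factors. Since `D(X)` and `D(Xᵀ)` are adjoint,
`⟨(C + N) T, T⟩ = ∑ ‖D(E_ac) T‖² + N ‖T‖²`, so `C + N` is injective. On `sp`-invariants
`D(X) = -D(ε Xᵀ ε)`; substituting this for the second factor of each summand, the terms with both
operators on the same factor add up to `-N`, and what remains is
`(C + N) T = ∑_{i ≠ j} ε_ij · contract_ij T`. Contractions of invariants are invariants on `N - 2`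
factors, hence by induction combinations of matchings, so `C + N` maps the invariants injectively
into the span of the matchings, which itself consists of invariants. A dimension count gives
equality, and raising the inputs again turns matching tensors into the maps `±F_β`.
-/

open Finset Function Matrix

section SiteAction

variable {R ι A : Type*} [CommRing R] [DecidableEq ι] [Fintype A]

/-- Tensors in `(R^A)^{⊗ι}`, represented by their coordinates in the standard basis. -/
abbrev Tensor (R ι A : Type*) := (ι → A) → R

/-- The linear endomorphism of `(R^A)^{⊗ι}` applying the matrix `X` to the `i`-th factor. -/
def siteLinearMap (i : ι) : Matrix A A R →ₗ[R] Module.End R (Tensor R ι A) where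
  toFun X :=
    { toFun := fun T K => ∑ q, X (K i) q * T (update K i q)
      map_add' := fun T U => by ext K; simp [mul_add, sum_add_distrib]
      map_smul' := fun r T => by ext K; simp [mul_sum, mul_left_comm] }
  map_add' X Y := by ext T K; simp [add_mul, sum_add_distrib]
  map_smul' r X := by ext T K; simp [mul_sum, mul_assoc]

/-- The action of the matrix algebra on the `i`-th factor of `(R^A)^{⊗ι}`. -/
def siteAction [DecidableEq A] (i : ι) : Matrix A A R →ₐ[R] Module.End R (Tensor R ι A) :=
  AlgHom.ofLinearMap (siteLinearMap i)
    (by ext T K; simp [siteLinearMap, Matrix.one_apply])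
    (fun X Y => by
      ext T K
      simp only [siteLinearMap, LinearMap.coe_mk, AddHom.coe_mk, Module.End.mul_apply,
        Matrix.mul_apply, sum_mul, mul_sum, update_self, update_idem, mul_assoc]
      exact sum_comm)

variable [DecidableEq A]

theorem siteAction_apply (i : ι) (X : Matrix A A R) (T : Tensor R ι A) (K : ι → A) :
    siteAction i X T K = ∑ q, X (K i) q * T (update K i q) := rfl

theorem siteAction_single_apply (i : ι) (a c : A) (T : Tensor R ι A) (K : ι → A) :
    siteAction i (single c a 1) T K = if c = K i then T (update K i a) else 0 := by
  simp [siteAction_apply, single_apply, ite_and]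

theorem siteAction_mul_of_dependsOn {i : ι} {t : Finset ι} (hi : i ∉ t) (X : Matrix A A R)
    (T : Tensor R ι A) {P : Tensor R ι A} (hP : DependsOn P t) :
    siteAction i X (T * P) = siteAction i X T * P := by
  ext K
  have hPK (q : A) : P (update K i q) = P K :=
    hP fun x hx => update_of_ne (ne_of_mem_of_not_mem hx hi) _ _
  simp [siteAction_apply, hPK, sum_mul, mul_assoc]

theorem siteAction_dotProduct [Fintype ι] (i : ι) (X : Matrix A A R) (T U : Tensor R ι A) :
    siteAction i X T ⬝ᵥ U = T ⬝ᵥ siteAction i Xᵀ U := by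
  let exchange (x : (ι → A) × A) : (ι → A) × A := (update x.1 i x.2, x.1 i)
  have exchange_involutive : Involutive exchange := fun x => by simp [exchange]
  simp only [dotProduct, siteAction_apply, sum_mul, mul_sum, ← Fintype.sum_prod_type']
  refine Fintype.sum_equiv exchange_involutive.toPerm _ _ fun x => ?_
  simp [exchange, mul_comm, mul_assoc]

/-- The derivation action of `gl(A)` on the factors of `(R^A)^{⊗ι}` indexed by `s`. -/
def derivationAction (s : Finset ι) : Matrix A A R →ₗ[R] Module.End R (Tensor R ι A) :=
  ∑ i ∈ s, (siteAction i).toLinearMap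

theorem derivationAction_apply (s : Finset ι) (X : Matrix A A R) :
    derivationAction s X = ∑ i ∈ s, siteAction i X := by
  simp [derivationAction]

theorem derivationAction_one (s : Finset ι) :
    derivationAction s (1 : Matrix A A R) = (#s : R) • (1 : Module.End R (Tensor R ι A)) := by
  simp [derivationAction_apply, ← Nat.cast_smul_eq_nsmul R]

theorem derivationAction_mul_derivationAction (s : Finset ι) (X Y : Matrix A A R) :
    derivationAction s X * derivationAction s Y =
      derivationAction s (X * Y) + ∑ i ∈ s, ∑ j ∈ s.erase i, siteAction i X * siteAction j Y := by
  simp only [derivationAction_apply, sum_mul_sum, map_mul, ← sum_add_distrib]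
  exact sum_congr rfl fun i hi => (add_sum_erase s _ hi).symm

theorem derivationAction_insert_insert {s : Finset ι} {i j : ι} (hij : i ≠ j) (hi : i ∉ s)
    (hj : j ∉ s) (X : Matrix A A R) :
    derivationAction (insert i (insert j s)) X =
      siteAction i X + siteAction j X + derivationAction s X := by
  simp [derivationAction_apply, hij, hi, hj, add_assoc]

theorem derivationAction_dotProduct [Fintype ι] (s : Finset ι) (X : Matrix A A R)
    (T U : Tensor R ι A) : derivationAction s X T ⬝ᵥ U = T ⬝ᵥ derivationAction s Xᵀ U := by
  simp only [derivationAction_apply, LinearMap.sum_apply, sum_dotProduct, dotProduct_sum,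
    siteAction_dotProduct]

end SiteAction

section Contraction

variable {R ι A : Type*} [CommRing R]

/-- The bilinear form with Gram matrix `M`, placed on the factors `i` and `j`. -/
def pairTensor (M : Matrix A A R) (i j : ι) : Tensor R ι A := fun K => M (K i) (K j)

theorem pairTensor_swap {E : Matrix A A R} (hE : Eᵀ = -E) (i j : ι) :
    pairTensor E j i = -pairTensor E i j := by
  ext K
  exact congrFun₂ hE (K i) (K j)

variable [DecidableEq ι]

theorem dependsOn_pairTensor_mul {s : Finset ι} {i j : ι} (M : Matrix A A R) {T : Tensor R ι A}
    (hT : DependsOn T s) :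
    DependsOn (pairTensor M i j * T) ↑(insert i (insert j s)) := by
  intro K L hKL
  have hi : K i = L i := hKL i (by simp)
  have hj : K j = L j := hKL j (by simp)
  have hTKL : T K = T L := hT fun x hx => hKL x (by simp [mem_coe.1 hx])
  simp [pairTensor, hi, hj, hTKL]

variable [Fintype A]

/-- The contraction of the factors `i` and `j` against `M`. The result keeps the index set `ι`
and is constant in the coordinates `i` and `j`. -/
def contract (i j : ι) (M : Matrix A A R) : Tensor R ι A →ₗ[R] Tensor R ι A where
  toFun T K := ∑ p, ∑ q, M p q * T (update (update K i p) j q)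
  map_add' T U := by ext K; simp [mul_add, sum_add_distrib]
  map_smul' r T := by ext K; simp [mul_sum, mul_left_comm]

theorem contract_apply (i j : ι) (M : Matrix A A R) (T : Tensor R ι A) (K : ι → A) :
    contract i j M T K = ∑ p, ∑ q, M p q * T (update (update K i p) j q) := rfl

theorem contract_add (i j : ι) (M N : Matrix A A R) (T : Tensor R ι A) :
    contract i j (M + N) T = contract i j M T + contract i j N T := by
  ext K; simp [contract_apply, add_mul, sum_add_distrib]

theorem contract_zero (i j : ι) (T : Tensor R ι A) :
    contract i j (0 : Matrix A A R) T = 0 := by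
  ext K; simp [contract_apply]

theorem dependsOn_contract {s : Finset ι} {i j : ι} (M : Matrix A A R) {T : Tensor R ι A}
    (hT : DependsOn T ↑(insert i (insert j s))) : DependsOn (contract i j M T) s := by
  intro K K' hK
  have hTpq (p q : A) :
      T (update (update K i p) j q) = T (update (update K' i p) j q) := by
    refine hT fun x hx => ?_
    by_cases hxj : x = j
    · simp [hxj]
    by_cases hxi : x = i
    · simp [hxi, update_apply]
    simpa [hxi, hxj] using hK x (by simpa [hxi, hxj] using hx)
  simp only [contract_apply, hTpq]

variable [DecidableEq A] {i j : ι}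

theorem siteAction_left_pairTensor (hij : i ≠ j) (X M : Matrix A A R) :
    siteAction i X (pairTensor M i j) = pairTensor (X * M) i j := by
  ext K
  simp [siteAction_apply, pairTensor, Matrix.mul_apply, update_of_ne hij.symm]

theorem siteAction_right_pairTensor (hij : i ≠ j) (X M : Matrix A A R) :
    siteAction j X (pairTensor M i j) = pairTensor (M * Xᵀ) i j := by
  ext K
  simp [siteAction_apply, pairTensor, Matrix.mul_apply, update_of_ne hij, mul_comm]

theorem contract_siteAction_left (hij : i ≠ j) (X M : Matrix A A R) (T : Tensor R ι A) :
    contract i j M (siteAction i X T) = contract i j (Xᵀ * M) T := by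
  ext K
  have hupdate (p q r : A) :
      update (update (update K i p) j q) i r = update (update K i r) j q := by
    rw [update_comm hij.symm, update_idem]
  simp only [contract_apply, siteAction_apply, update_of_ne hij, update_self, hupdate,
    Matrix.mul_apply, transpose_apply, mul_sum, sum_mul]
  rw [sum_congr rfl fun p _ => sum_comm, sum_comm]
  refine sum_congr rfl fun r _ => sum_comm.trans ?_
  exact sum_congr rfl fun q _ => sum_congr rfl fun p _ => by ring

theorem contract_siteAction_right (X M : Matrix A A R) (T : Tensor R ι A) :
    contract i j M (siteAction j X T) = contract i j (M * X) T := by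
  ext K
  simp only [contract_apply, siteAction_apply, update_self, update_idem, Matrix.mul_apply,
    mul_sum, sum_mul, mul_assoc]
  exact sum_congr rfl fun p _ => sum_comm

theorem contract_siteAction_of_ne {r : ι} (hri : r ≠ i) (hrj : r ≠ j) (X M : Matrix A A R)
    (T : Tensor R ι A) :
    contract i j M (siteAction r X T) = siteAction r X (contract i j M T) := by
  ext K
  have hupdate (p q a : A) :
      update (update (update K i p) j q) r a = update (update (update K r a) i p) j q := by
    rw [update_comm hrj.symm, update_comm hri.symm]
  simp only [contract_apply, siteAction_apply, update_of_ne hri, update_of_ne hrj, hupdate,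
    mul_sum]
  rw [sum_congr rfl fun p _ => sum_comm, sum_comm]
  exact sum_congr rfl fun a _ => sum_congr rfl fun p _ => sum_congr rfl fun q _ =>
    mul_left_comm _ _ _

theorem contract_derivationAction {s : Finset ι} (hij : i ≠ j) (hi : i ∉ s) (hj : j ∉ s)
    (X M : Matrix A A R) (T : Tensor R ι A) :
    contract i j M (derivationAction (insert i (insert j s)) X T) =
      contract i j (Xᵀ * M + M * X) T + derivationAction s X (contract i j M T) := by
  rw [derivationAction_insert_insert hij hi hj]
  simp only [LinearMap.add_apply, map_add, contract_siteAction_left hij,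
    contract_siteAction_right, contract_add, derivationAction_apply, LinearMap.sum_apply, map_sum]
  congr 1
  exact sum_congr rfl fun r hr => contract_siteAction_of_ne (ne_of_mem_of_not_mem hr hi)
    (ne_of_mem_of_not_mem hr hj) X M T

end Contraction

section Matching

variable {R ι A : Type*} [CommRing R] [DecidableEq ι]

/-- The tensors on the factors indexed by `s` obtained by placing `E` on each pair of a perfect
matching of `s`, the two elements of each pair being taken in either order. -/
inductive IsMatchingTensor (E : Matrix A A R) : Finset ι → Tensor R ι A → Prop
  | empty : IsMatchingTensor E ∅ 1
  | insert_pair {s : Finset ι} {P : Tensor R ι A} {i j : ι} (hij : i ≠ j) (hi : i ∉ s)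
      (hj : j ∉ s) (hP : IsMatchingTensor E s P) :
      IsMatchingTensor E (insert i (insert j s)) (pairTensor E i j * P)

/-- The span of the matching tensors on the factors indexed by `s`. -/
def matchingSpan (E : Matrix A A R) (s : Finset ι) : Submodule R (Tensor R ι A) :=
  Submodule.span R {P | IsMatchingTensor E s P}

theorem pairTensor_mul_mem_matchingSpan {E : Matrix A A R} {s : Finset ι} {T : Tensor R ι A}
    {i j : ι} (hij : i ≠ j) (hi : i ∉ s) (hj : j ∉ s) (hT : T ∈ matchingSpan E s) :
    pairTensor E i j * T ∈ matchingSpan E (insert i (insert j s)) := by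
  have hmap : (matchingSpan E s).map (LinearMap.mulLeft R (pairTensor E i j)) ≤
      matchingSpan E (insert i (insert j s)) := by
    rw [matchingSpan, Submodule.map_span, Submodule.span_le]
    rintro _ ⟨P, hP, rfl⟩
    exact Submodule.subset_span (.insert_pair hij hi hj hP)
  exact hmap ⟨T, hT, rfl⟩

end Matching

section Invariants

variable {R ι A : Type*} [CommRing R] [DecidableEq ι] [Fintype A] [DecidableEq A]

/-- `E` is the Gram matrix of a symplectic form in a basis that is orthonormal for a compatible
inner product, such as a Darboux basis. -/
structure IsSymplecticGram (E : Matrix A A R) : Prop where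
  transpose_eq : Eᵀ = -E
  mul_self : E * E = -1

/-- The tensors on the factors indexed by `s` that are annihilated by the Lie algebra
`sp(E) = {X | Xᵀ E + E X = 0}`. -/
def symplecticInvariants (E : Matrix A A R) (s : Finset ι) : Submodule R (Tensor R ι A) where
  carrier := {T | DependsOn T s ∧ ∀ X, Xᵀ * E + E * X = 0 → derivationAction s X T = 0}
  add_mem' := fun {T U} hT hU =>
    ⟨fun K L hKL => congrArg₂ (· + ·) (hT.1 hKL) (hU.1 hKL), fun X hX => by
      rw [map_add, hT.2 X hX, hU.2 X hX, add_zero]⟩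
  zero_mem' := ⟨fun _ _ _ => rfl, fun X _ => map_zero _⟩
  smul_mem' := fun r T hT =>
    ⟨fun K L hKL => congrArg (r • ·) (hT.1 hKL), fun X hX => by
      rw [map_smul, hT.2 X hX, smul_zero]⟩

variable {E : Matrix A A R} {s : Finset ι} {T : Tensor R ι A} {i j : ι}

theorem contract_mem_symplecticInvariants (hij : i ≠ j) (hi : i ∉ s) (hj : j ∉ s)
    (hT : T ∈ symplecticInvariants E (insert i (insert j s))) :
    contract i j E T ∈ symplecticInvariants E s := by
  refine ⟨dependsOn_contract E hT.1, fun X hX => ?_⟩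
  have h := contract_derivationAction hij hi hj X E T
  rwa [hT.2 X hX, map_zero, hX, contract_zero, zero_add, eq_comm] at h

theorem mem_symplecticInvariants_empty_iff :
    T ∈ symplecticInvariants E ∅ ↔ DependsOn T ∅ := by
  simp [symplecticInvariants, derivationAction_apply]

theorem symplecticInvariants_empty_le :
    symplecticInvariants E (∅ : Finset ι) ≤ matchingSpan E ∅ := by
  intro T hT
  rw [mem_symplecticInvariants_empty_iff] at hT
  rcases isEmpty_or_nonempty (ι → A) with _ | ⟨⟨K₀⟩⟩
  · exact Subsingleton.elim 0 T ▸ zero_mem _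
  · have hconst : T = T K₀ • (1 : Tensor R ι A) := by
      ext K
      simpa using hT.empty K K₀
    rw [hconst]
    exact Submodule.smul_mem _ _ (Submodule.subset_span .empty)

theorem derivationAction_pairTensor_mul (hij : i ≠ j) (hi : i ∉ s) (hj : j ∉ s)
    (X M : Matrix A A R) (hT : DependsOn T s) :
    derivationAction (insert i (insert j s)) X (pairTensor M i j * T) =
      pairTensor (X * M + M * Xᵀ) i j * T + pairTensor M i j * derivationAction s X T := by
  have hpair : DependsOn (pairTensor M i j) ↑({i, j} : Finset ι) := by
    intro K L hKL
    simp [pairTensor, hKL i (by simp), hKL j (by simp)]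
  have hsite : ∀ r ∈ s, siteAction r X (pairTensor M i j * T) =
      pairTensor M i j * siteAction r X T := fun r hr => by
    have hr' : r ∉ ({i, j} : Finset ι) := by
      simpa using ⟨ne_of_mem_of_not_mem hr hi, ne_of_mem_of_not_mem hr hj⟩
    rw [mul_comm, siteAction_mul_of_dependsOn hr' X T hpair, mul_comm]
  have hadd : pairTensor (X * M + M * Xᵀ) i j =
      pairTensor (X * M) i j + pairTensor (M * Xᵀ) i j := rfl
  rw [derivationAction_insert_insert hij hi hj, LinearMap.add_apply, LinearMap.add_apply,
    siteAction_mul_of_dependsOn hi X _ hT, siteAction_mul_of_dependsOn hj X _ hT,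
    siteAction_left_pairTensor hij, siteAction_right_pairTensor hij, hadd, add_mul]
  simp only [derivationAction_apply, LinearMap.sum_apply, mul_sum, sum_congr rfl hsite]

end Invariants

namespace IsSymplecticGram

variable {R ι A : Type*} [CommRing R] [DecidableEq ι] [Fintype A] [DecidableEq A]
  {E : Matrix A A R} {s : Finset ι} {T : Tensor R ι A} {i j : ι}

theorem transpose_mul_self (hE : IsSymplecticGram E) : Eᵀ * E = 1 := by
  rw [hE.transpose_eq, neg_mul, hE.mul_self, neg_neg]

theorem mul_transpose_self (hE : IsSymplecticGram E) : E * Eᵀ = 1 :=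
  mul_eq_one_comm.1 hE.transpose_mul_self

theorem add_mul_transpose_mul_mem (hE : IsSymplecticGram E) (X : Matrix A A R) :
    (X + E * Xᵀ * E)ᵀ * E + E * (X + E * Xᵀ * E) = 0 := by
  have hleft : E * (X * (E * E)) = -(E * X) := by simp [hE.mul_self]
  have hright : E * (E * (Xᵀ * E)) = -(Xᵀ * E) := by
    rw [← Matrix.mul_assoc, hE.mul_self, neg_mul, one_mul]
  simp only [transpose_add, transpose_mul, transpose_transpose, hE.transpose_eq, neg_mul, mul_neg,
    neg_neg, add_mul, mul_add, Matrix.mul_assoc, hleft, hright]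
  abel

theorem mul_add_mul_transpose_eq_zero (hE : IsSymplecticGram E) {X : Matrix A A R}
    (hX : Xᵀ * E + E * X = 0) : X * E + E * Xᵀ = 0 := by
  have hconj : E * (Xᵀ * E + E * X) * E = -(X * E + E * Xᵀ) := by
    rw [mul_add, add_mul, ← Matrix.mul_assoc E E, hE.mul_self, ← Matrix.mul_assoc E,
      Matrix.mul_assoc _ E E, hE.mul_self]
    simp [add_comm]
  rw [hX, mul_zero, zero_mul] at hconj
  exact neg_eq_zero.1 hconj.symm

theorem derivationAction_eq_neg (hE : IsSymplecticGram E) (hT : T ∈ symplecticInvariants E s)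
    (X : Matrix A A R) : derivationAction s X T = -derivationAction s (E * Xᵀ * E) T := by
  have h := hT.2 _ (hE.add_mul_transpose_mul_mem X)
  rw [map_add, LinearMap.add_apply] at h
  exact eq_neg_of_add_eq_zero_left h

theorem sum_single_mul_mul_single_mul (hE : IsSymplecticGram E) :
    ∑ a, ∑ c, single c a 1 * (E * single c a 1 * E) = 1 := by
  have h : ∑ a, ∑ c, single c a (E a c) = Eᵀ := by
    rw [sum_comm]
    exact (matrix_eq_sum_single Eᵀ).symm
  simp only [← Matrix.mul_assoc, single_mul_mul_single, one_mul, mul_one, ← Finset.sum_mul, h,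
    hE.transpose_mul_self]

theorem sum_siteAction_siteAction (hE : IsSymplecticGram E) (hij : i ≠ j) (T : Tensor R ι A) :
    ∑ a, ∑ c, siteAction i (single c a 1) (siteAction j (E * single c a 1 * E) T) =
      -(pairTensor E i j * contract i j E T) := by
  ext K
  have hanti : E (K j) (K i) = -E (K i) (K j) := congrFun₂ hE.transpose_eq (K i) (K j)
  have hentry (a c q : A) :
      (E * (single c a 1 : Matrix A A R) * E) (K j) q = E (K j) c * E a q := by
    simp [Matrix.mul_apply, single_apply, ite_and]
  simp only [Finset.sum_apply, siteAction_single_apply, sum_ite_eq', mem_univ, if_true]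
  simp only [siteAction_apply, update_of_ne hij.symm, hentry, hanti, pairTensor, contract_apply,
    Pi.neg_apply, Pi.mul_apply, mul_sum, ← sum_neg_distrib]
  exact sum_congr rfl fun p _ => sum_congr rfl fun q _ => by ring

theorem matchingSpan_le_symplecticInvariants (hE : IsSymplecticGram E) (s : Finset ι) :
    matchingSpan E s ≤ symplecticInvariants E s := by
  rw [matchingSpan, Submodule.span_le]
  intro P hP
  induction hP with
  | empty => exact mem_symplecticInvariants_empty_iff.2 (dependsOn_const 1)
  | insert_pair hij hi hj _ hP =>
    refine ⟨dependsOn_pairTensor_mul E hP.1, fun X hX => ?_⟩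
    have hzero (i j : ι) : pairTensor (0 : Matrix A A R) i j = 0 := rfl
    rw [derivationAction_pairTensor_mul hij hi hj X E hP.1, hE.mul_add_mul_transpose_eq_zero hX,
      hP.2 X hX, hzero, zero_mul, mul_zero, add_zero]

end IsSymplecticGram

section Casimir

variable {R ι A : Type*} [DecidableEq ι] [Fintype A] [DecidableEq A]

/-- The Casimir operator of `gl(A)` on the factors of `(R^A)^{⊗ι}` indexed by `s`. -/
def casimir (R A : Type*) [CommRing R] [Fintype A] [DecidableEq A] (s : Finset ι) :
    Module.End R (Tensor R ι A) :=
  ∑ a, ∑ c, derivationAction s (single c a 1) * derivationAction s (single a c 1)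

theorem casimir_dotProduct_self [CommRing R] [Fintype ι] (s : Finset ι) (T : Tensor R ι A) :
    casimir R A s T ⬝ᵥ T = ∑ a, ∑ c,
      derivationAction s (single a c 1) T ⬝ᵥ derivationAction s (single a c 1) T := by
  simp only [casimir, LinearMap.sum_apply, sum_dotProduct, Module.End.mul_apply,
    derivationAction_dotProduct s (single _ _ _), transpose_single]

theorem casimir_add_card_injective [CommRing R] [LinearOrder R] [IsStrictOrderedRing R] [Finite ι]
    {s : Finset ι} (hs : s.Nonempty) :
    Injective (casimir R A s + (#s : R) • (1 : Module.End R (Tensor R ι A))) := by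
  have := Fintype.ofFinite ι
  rw [injective_iff_map_eq_zero]
  intro T hT
  have hdot : casimir R A s T ⬝ᵥ T + #s * (T ⬝ᵥ T) = 0 := by
    have h := congrArg (· ⬝ᵥ T) hT
    simpa [add_dotProduct, smul_dotProduct] using h
  have hcasimir : 0 ≤ casimir R A s T ⬝ᵥ T := by
    rw [casimir_dotProduct_self]
    exact sum_nonneg fun a _ => sum_nonneg fun c _ => sum_nonneg fun K _ => mul_self_nonneg _
  have hcard : (0 : R) < #s := by exact_mod_cast hs.card_pos
  have hTT : 0 ≤ T ⬝ᵥ T := sum_nonneg fun K _ => mul_self_nonneg _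
  exact dotProduct_self_eq_zero.1 (by nlinarith)

theorem IsSymplecticGram.casimir_add_card_apply [CommRing R] {E : Matrix A A R}
    (hE : IsSymplecticGram E) {s : Finset ι} {T : Tensor R ι A}
    (hT : T ∈ symplecticInvariants E s) :
    (casimir R A s + (#s : R) • (1 : Module.End R (Tensor R ι A))) T =
      ∑ i ∈ s, ∑ j ∈ s.erase i, pairTensor E i j * contract i j E T := by
  have hcasimir : casimir R A s T = -∑ a, ∑ c, derivationAction s (single c a 1)
      (derivationAction s (E * single c a 1 * E) T) := by
    simp only [casimir, LinearMap.sum_apply, Module.End.mul_apply,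
      hE.derivationAction_eq_neg hT (single _ _ _), transpose_single, map_neg, sum_neg_distrib]
  have hdiagonal : ∑ a, ∑ c, derivationAction s (single c a 1 * (E * single c a 1 * E)) T =
      (#s : R) • T := by
    simp only [← LinearMap.sum_apply, ← map_sum, hE.sum_single_mul_mul_single_mul,
      derivationAction_one, LinearMap.smul_apply, Module.End.one_apply]
  have hcross : ∑ a, ∑ c, ∑ i ∈ s, ∑ j ∈ s.erase i,
      siteAction i (single c a 1) (siteAction j (E * single c a 1 * E) T) =
        -∑ i ∈ s, ∑ j ∈ s.erase i, pairTensor E i j * contract i j E T := by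
    simp only [← sum_neg_distrib]
    rw [sum_congr rfl fun a _ => sum_comm, sum_comm]
    refine sum_congr rfl fun i _ => ?_
    rw [sum_congr rfl fun a _ => sum_comm, sum_comm]
    exact sum_congr rfl fun j hj => hE.sum_siteAction_siteAction (ne_of_mem_erase hj).symm T
  simp only [← Module.End.mul_apply, derivationAction_mul_derivationAction] at hcasimir
  simp only [LinearMap.add_apply, sum_add_distrib, hdiagonal, LinearMap.sum_apply,
    Module.End.mul_apply, hcross] at hcasimir
  rw [LinearMap.add_apply, hcasimir, LinearMap.smul_apply, Module.End.one_apply]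
  abel

theorem submodule_eq_of_injective_of_map_le {K V : Type*} [Field K] [AddCommGroup V] [Module K V]
    [FiniteDimensional K V] {L : V →ₗ[K] V} (hL : Injective L) {U W : Submodule K V}
    (hUW : U ≤ W) (hmap : W.map L ≤ U) : U = W := by
  refine Submodule.eq_of_le_of_finrank_le hUW ?_
  rw [(Submodule.equivMapOfInjective L hL W).finrank_eq]
  exact Submodule.finrank_mono hmap

theorem IsSymplecticGram.matchingSpan_eq_symplecticInvariants [Field R] [LinearOrder R]
    [IsStrictOrderedRing R] [Finite ι] {E : Matrix A A R} (hE : IsSymplecticGram E)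
    (s : Finset ι) : matchingSpan E s = symplecticInvariants E s := by
  induction s using Finset.strongInduction with
  | H s ih =>
  have hle := hE.matchingSpan_le_symplecticInvariants s
  rcases s.eq_empty_or_nonempty with rfl | hs
  · exact hle.antisymm symplecticInvariants_empty_le
  refine submodule_eq_of_injective_of_map_le (casimir_add_card_injective hs) hle ?_
  rintro _ ⟨T, hT, rfl⟩
  rw [hE.casimir_add_card_apply hT]
  refine Submodule.sum_mem _ fun i hi => Submodule.sum_mem _ fun j hj => ?_
  set t := (s.erase i).erase j with ht
  have hinsert : insert i (insert j t) = s := by rw [insert_erase hj, insert_erase hi]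
  have hij : i ≠ j := (ne_of_mem_erase hj).symm
  have hit : i ∉ t := by simp [t]
  have hjt : j ∉ t := by simp [t]
  have hts : t ⊂ s := (erase_subset _ _).trans_ssubset (erase_ssubset hi)
  rw [← hinsert] at hT ⊢
  refine pairTensor_mul_mem_matchingSpan hij hit hjt ?_
  rw [ih t hts]
  exact contract_mem_symplecticInvariants hij hit hjt hT

end Casimir

section SymplecticGroup

open NormedSpace
open scoped Matrix.Norms.Operator

theorem exp_transpose_mul_mul_exp {A : Type*} [Fintype A] [DecidableEq A] {E X : Matrix A A ℝ}
    (hX : Xᵀ * E + E * X = 0) : (exp X)ᵀ * E * exp X = E := by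
  have hsemiconj : SemiconjBy E X (-Xᵀ) := by
    rw [SemiconjBy, neg_mul]
    exact eq_neg_of_add_eq_zero_right hX
  simpa [← Matrix.exp_transpose] using! hsemiconj.exp_neg_mul_mul_exp_eq_self

theorem hasDerivAt_exp_smul_zero_apply {A : Type*} [Fintype A] [DecidableEq A]
    (X : Matrix A A ℝ) (a b : A) :
    HasDerivAt (fun t : ℝ => exp (t • X) a b) (X a b) 0 := by
  have h : HasDerivAt (fun t : ℝ => exp (t • X)) X 0 := by
    simpa using! hasDerivAt_exp_smul_const (𝕂 := ℝ) X 0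
  exact hasDerivAt_pi.1 (hasDerivAt_pi.1 h a) b

theorem sum_prod_one_apply_mul {R ι A : Type*} [CommRing R] [Fintype ι] [DecidableEq ι]
    [Fintype A] [DecidableEq A] (i : ι) (X : Matrix A A R) (T : Tensor R ι A) (K : ι → A) :
    ∑ L, (∏ j ∈ univ.erase i, (1 : Matrix A A R) (K j) (L j)) * X (K i) (L i) * T L =
      siteAction i X T K := by
  have hprod (L : ι → A) : ∏ j ∈ univ.erase i, (1 : Matrix A A R) (K j) (L j) =
      if L = update K i (L i) then 1 else 0 := by
    simp [Matrix.one_apply, prod_ite_zero, eq_update_iff, eq_comm]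
  rw [siteAction_apply]
  refine (sum_of_injOn (update K i) (update_injective K i).injOn (by simp) ?_ ?_).symm
  · intro L _ hL
    have hne : L ≠ update K i (L i) := fun h => hL ⟨L i, by simp, h.symm⟩
    rw [hprod, if_neg hne, zero_mul, zero_mul]
  · intro q _
    simp [hprod]

theorem hasDerivAt_tensorPow_mulVec {n N : ℕ} {g : ℝ → Matrix (Fin n) (Fin n) ℝ}
    {X : Matrix (Fin n) (Fin n) ℝ} (hg0 : g 0 = 1)
    (hg : ∀ a b, HasDerivAt (fun t => g t a b) (X a b) 0) (T : Tensor ℝ (Fin N) (Fin n))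
    (K : Fin N → Fin n) :
    HasDerivAt (fun t => (tensorPow n N (g t) *ᵥ T) K) (derivationAction univ X T K) 0 := by
  have hprod (L : Fin N → Fin n) := HasDerivAt.fun_finsetProd (u := univ) (x := (0 : ℝ))
    (f := fun i t => g t (K i) (L i)) fun i _ => hg (K i) (L i)
  have hsum := HasDerivAt.fun_sum (u := univ) fun L _ => (hprod L).mul_const (T L)
  refine hsum.congr_deriv ?_
  simp only [hg0, smul_eq_mul, sum_mul]
  rw [sum_comm]
  simp only [sum_prod_one_apply_mul, derivationAction_apply, LinearMap.sum_apply,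
    Finset.sum_apply]

theorem mem_symplecticInvariants_of_tensorPow_mulVec_eq {n N : ℕ}
    {E : Matrix (Fin n) (Fin n) ℝ} {T : Tensor ℝ (Fin N) (Fin n)}
    (hT : ∀ g, gᵀ * E * g = E → tensorPow n N g *ᵥ T = T) :
    T ∈ symplecticInvariants E univ := by
  refine ⟨by simpa using dependsOn_univ T, fun X hX => ?_⟩
  ext K
  have hfixed (t : ℝ) : tensorPow n N (exp (t • X)) *ᵥ T = T := by
    refine hT _ (exp_transpose_mul_mul_exp ?_)
    rw [transpose_smul, Matrix.smul_mul, Matrix.mul_smul, ← smul_add, hX, smul_zero]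
  have hderiv := hasDerivAt_tensorPow_mulVec (by simp) (hasDerivAt_exp_smul_zero_apply X) T K
  simp only [hfixed] at hderiv
  exact hderiv.unique (hasDerivAt_const 0 (T K))

end SymplecticGroup

section Splitting

theorem tensorPow_mul {n : ℕ} (k : ℕ) (g h : Matrix (Fin n) (Fin n) ℝ) :
    tensorPow n k (g * h) = tensorPow n k g * tensorPow n k h := by
  ext I J
  simp [tensorPow, Matrix.mul_apply, prod_univ_sum, prod_mul_distrib]

theorem tensorPow_one (n k : ℕ) : tensorPow n k 1 = 1 := by
  ext I J
  simp [tensorPow, Matrix.one_apply, prod_ite_zero, funext_iff]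

theorem tensorPow_transpose {n : ℕ} (k : ℕ) (g : Matrix (Fin n) (Fin n) ℝ) :
    tensorPow n k gᵀ = (tensorPow n k g)ᵀ := rfl

/-- A tensor on `l + k` factors, regarded as a matrix from the last `k` factors to the first
`l` factors. -/
def splitTensor (R A : Type*) [CommRing R] (l k : ℕ) :
    Tensor R (Fin (l + k)) A ≃ₗ[R] Matrix (Fin l → A) (Fin k → A) R where
  toFun T := Matrix.of fun I J => T (Fin.append I J)
  invFun M K := M (fun i => K (Fin.castAdd k i)) (fun j => K (Fin.natAdd l j))
  map_add' _ _ := rfl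
  map_smul' _ _ := rfl
  left_inv T := by ext K; simp [Fin.append_castAdd_natAdd]
  right_inv M := by ext I J; simp

theorem splitTensor_apply {R A : Type*} [CommRing R] {l k : ℕ} (T : Tensor R (Fin (l + k)) A)
    (I : Fin l → A) (J : Fin k → A) : splitTensor R A l k T I J = T (Fin.append I J) := rfl

theorem splitTensor_tensorPow_mulVec {n l k : ℕ} (g : Matrix (Fin n) (Fin n) ℝ)
    (T : Tensor ℝ (Fin (l + k)) (Fin n)) :
    splitTensor ℝ _ l k (tensorPow n (l + k) g *ᵥ T) =
      tensorPow n l g * splitTensor ℝ _ l k T * tensorPow n k gᵀ := by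
  ext I J
  simp only [splitTensor_apply, mulVec, dotProduct, Matrix.mul_apply, tensorPow, Matrix.of_apply,
    transpose_apply, sum_mul]
  rw [← (Fin.appendEquiv l k).sum_comp, Fintype.sum_prod_type_right]
  simp only [Fin.appendEquiv_apply, Fin.prod_univ_add, Fin.append_left, Fin.append_right]
  exact sum_congr rfl fun J' _ => sum_congr rfl fun I' _ => mul_right_comm _ _ _

/-- The matrix obtained from a tensor on `l + k` factors by raising the last `k` indices with
`E⁻¹ = Eᵀ`. -/
def raiseInputs {n : ℕ} (l k : ℕ) (E : Matrix (Fin n) (Fin n) ℝ) :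
    Tensor ℝ (Fin (l + k)) (Fin n) →ₗ[ℝ] Matrix (Fin l → Fin n) (Fin k → Fin n) ℝ :=
  mulRightLinearMap (Fin l → Fin n) ℝ (tensorPow n k Eᵀ) ∘ₗ
    (splitTensor ℝ (Fin n) l k).toLinearMap

/-- The tensor on `l + k` factors obtained from a matrix by lowering its `k` input indices
with `E`. -/
def lowerInputs {n l k : ℕ} (E : Matrix (Fin n) (Fin n) ℝ)
    (φ : Matrix (Fin l → Fin n) (Fin k → Fin n) ℝ) : Tensor ℝ (Fin (l + k)) (Fin n) :=
  (splitTensor ℝ (Fin n) l k).symm (φ * tensorPow n k E)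

namespace IsSymplecticGram

variable {n l k : ℕ} {E : Matrix (Fin n) (Fin n) ℝ}

theorem raiseInputs_lowerInputs (hE : IsSymplecticGram E)
    (φ : Matrix (Fin l → Fin n) (Fin k → Fin n) ℝ) :
    raiseInputs l k E (lowerInputs E φ) = φ := by
  simp [raiseInputs, lowerInputs, Matrix.mul_assoc, ← tensorPow_mul, hE.mul_transpose_self,
    tensorPow_one]

theorem mul_mul_transpose_eq {R A : Type*} [CommRing R] [Fintype A] [DecidableEq A]
    {E g : Matrix A A R} (hE : IsSymplecticGram E) (hg : gᵀ * E * g = E) : g * E * gᵀ = E := by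
  have hinv : g * (Eᵀ * gᵀ * E) = 1 := by
    rw [mul_eq_one_comm, Matrix.mul_assoc, Matrix.mul_assoc, ← Matrix.mul_assoc gᵀ, hg,
      hE.transpose_mul_self]
  calc g * E * gᵀ = g * (Eᵀ * gᵀ * E) * E := by
        simp [hE.transpose_eq, Matrix.mul_assoc, hE.mul_self]
    _ = E := by rw [hinv, one_mul]

theorem lowerInputs_mem_symplecticInvariants (hE : IsSymplecticGram E)
    {φ : Matrix (Fin l → Fin n) (Fin k → Fin n) ℝ}
    (hφ : ∀ g, gᵀ * E * g = E → tensorPow n l g * φ = φ * tensorPow n k g) :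
    lowerInputs E φ ∈ symplecticInvariants E univ := by
  refine mem_symplecticInvariants_of_tensorPow_mulVec_eq fun g hg => ?_
  apply (splitTensor ℝ (Fin n) l k).injective
  rw [splitTensor_tensorPow_mulVec, lowerInputs, LinearEquiv.apply_symm_apply]
  calc tensorPow n l g * (φ * tensorPow n k E) * tensorPow n k gᵀ
      = φ * tensorPow n k (g * E * gᵀ) := by
        rw [← Matrix.mul_assoc, hφ g hg, tensorPow_mul, tensorPow_mul]
        simp only [Matrix.mul_assoc]
    _ = φ * tensorPow n k E := by rw [hE.mul_mul_transpose_eq hg]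

end IsSymplecticGram

end Splitting

section Pairing

variable {ι : Type*} {f : ι → ι} {s : Finset ι} {i j : ι}

/-- A perfect matching of `s`, encoded by the map sending each element to the one it is
matched with. -/
def IsPairing (f : ι → ι) (s : Finset ι) : Prop :=
  ∀ x ∈ s, f x ∈ s ∧ f (f x) = x ∧ f x ≠ x

theorem IsPairing.insert_insert [DecidableEq ι] (hf : IsPairing f s) (hij : i ≠ j) (hi : i ∉ s)
    (hj : j ∉ s) :
    IsPairing (update (update f i j) j i) (insert i (insert j s)) := by
  intro x hx
  rcases mem_insert.1 hx with rfl | hx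
  · simp [hij, hij.symm]
  rcases mem_insert.1 hx with rfl | hx
  · simp [hij]
  · have hne {y : ι} (hy : y ∈ s) : update (update f i j) j i y = f y := by
      rw [update_of_ne (ne_of_mem_of_not_mem hy hj), update_of_ne (ne_of_mem_of_not_mem hy hi)]
    obtain ⟨hmem, hinvol, hfix⟩ := hf x hx
    rw [hne hx, hne hmem]
    exact ⟨by simp [hmem], hinvol, hfix⟩

variable [LinearOrder ι]

theorem IsPairing.prod_eq {M : Type*} [CommMonoid M] (hf : IsPairing f s) (w : ι → M) :
    ∏ x ∈ s, w x = ∏ x ∈ s with x < f x, w x * w (f x) := by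
  rw [prod_mul_distrib, ← prod_filter_mul_prod_filter_not s (fun x => x < f x) w]
  congr 1
  refine prod_nbij' f f ?_ ?_ ?_ ?_ ?_
  · intro x hx
    obtain ⟨hxs, hlt⟩ := mem_filter.1 hx
    obtain ⟨hmem, hinvol, hfix⟩ := hf x hxs
    exact mem_filter.2 ⟨hmem, by rw [hinvol]; exact lt_of_le_of_ne (not_lt.1 hlt) hfix⟩
  · intro x hx
    obtain ⟨hxs, hlt⟩ := mem_filter.1 hx
    obtain ⟨hmem, hinvol, -⟩ := hf x hxs
    exact mem_filter.2 ⟨hmem, by rw [hinvol]; exact hlt.not_gt⟩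
  · exact fun x hx => (hf x (mem_of_mem_filter x hx)).2.1
  · exact fun x hx => (hf x (mem_of_mem_filter x hx)).2.1
  · exact fun x hx => by rw [(hf x (mem_of_mem_filter x hx)).2.1]

variable {R A : Type*} [CommRing R] {E : Matrix A A R}

/-- The tensor placing `E` on each pair of the perfect matching `f` of `s`, in increasing
order. -/
def pairingTensor (E : Matrix A A R) (s : Finset ι) (f : ι → ι) : Tensor R ι A :=
  ∏ x ∈ s with x < f x, pairTensor E x (f x)

theorem pairingTensor_insert_insert (E : Matrix A A R) (f : ι → ι) (hij : i ≠ j) (hi : i ∉ s)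
    (hj : j ∉ s) :
    pairingTensor E (insert i (insert j s)) (update (update f i j) j i) =
      (if i < j then pairTensor E i j else pairTensor E j i) * pairingTensor E s f := by
  have hs : ∏ x ∈ s with x < update (update f i j) j i x,
      pairTensor E x (update (update f i j) j i x) = pairingTensor E s f := by
    rw [pairingTensor, prod_filter, prod_filter]
    refine prod_congr rfl fun x hx => ?_
    rw [update_of_ne (ne_of_mem_of_not_mem hx hj), update_of_ne (ne_of_mem_of_not_mem hx hi)]
  rw [← hs, pairingTensor, prod_filter, prod_insert (by simp [hij, hi]), prod_insert hj,
    ← prod_filter, update_of_ne hij, update_self, update_self, ← mul_assoc]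
  rcases lt_or_gt_of_ne hij with h | h <;> simp [h, h.not_gt]

theorem IsMatchingTensor.exists_pairingTensor (hE : Eᵀ = -E) {P : Tensor R ι A}
    (hP : IsMatchingTensor E s P) :
    ∃ f, IsPairing f s ∧ (P = pairingTensor E s f ∨ P = -pairingTensor E s f) := by
  induction hP with
  | empty => exact ⟨id, by simp [IsPairing], by simp [pairingTensor]⟩
  | @insert_pair s P i j hij hi hj _ ih =>
    obtain ⟨f, hf, hP⟩ := ih
    refine ⟨_, hf.insert_insert hij hi hj, ?_⟩
    rw [pairingTensor_insert_insert E f hij hi hj, pairTensor_swap hE i j]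
    rcases hP with rfl | rfl <;> split_ifs <;> simp

end Pairing

section StandardForm

variable {m : ℕ}

/-- The index `b` for which `e_b` pairs nontrivially with `e_a`; it exchanges `a` and `a′`. -/
def partner (a : Fin (2 * m)) : Fin (2 * m) :=
  ⟨if a.val % 2 = 0 then a.val + 1 else a.val - 1, by split_ifs <;> omega⟩

/-- The value `Ω(e_a, e_{partner a})`. -/
def partnerSign (a : Fin (2 * m)) : ℝ := if a.val % 2 = 0 then 1 else -1

theorem partner_partner (a : Fin (2 * m)) : partner (partner a) = a := by
  ext
  simp only [partner]
  split_ifs <;> omega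

theorem partner_inj {a b : Fin (2 * m)} : partner a = partner b ↔ a = b :=
  (Involutive.injective partner_partner).eq_iff

theorem partnerSign_mul_self (a : Fin (2 * m)) : partnerSign a * partnerSign a = 1 := by
  unfold partnerSign
  split_ifs <;> norm_num

theorem partnerSign_partner (a : Fin (2 * m)) : partnerSign (partner a) = -partnerSign a := by
  simp only [partnerSign, partner]
  split_ifs <;> first | omega | norm_num

theorem eps_apply (a b : Fin (2 * m)) :
    eps m a b = if b = partner a then partnerSign a else 0 := by
  simp only [eps, Matrix.of_apply, partnerSign, Fin.ext_iff, partner]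
  split_ifs <;> first | rfl | omega

theorem isSymplecticGram_eps (m : ℕ) : IsSymplecticGram (eps m) where
  transpose_eq := by
    ext a b
    have hiff : a = partner b ↔ b = partner a := by
      rw [← partner_inj, partner_partner, eq_comm]
    simp only [transpose_apply, Matrix.neg_apply, eps_apply, hiff]
    split_ifs with h
    · rw [h, partnerSign_partner]
    · rw [neg_zero]
  mul_self := by
    ext a b
    simp only [Matrix.mul_apply, eps_apply, ite_mul, zero_mul, sum_ite_eq', mem_univ, if_true,
      partner_partner, partnerSign_partner]
    rcases eq_or_ne a b with rfl | hab
    · simp [partnerSign_mul_self]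
    · simp [hab, hab.symm]

theorem partnerSign_mul_eps_partner (a b : Fin (2 * m)) :
    partnerSign b * eps m a (partner b) = if a = b then 1 else 0 := by
  simp only [eps_apply, partner_inj, eq_comm (a := b)]
  split_ifs with h
  · rw [h, partnerSign_mul_self]
  · rw [mul_zero]

theorem partnerSign_mul_partnerSign_mul_eps_partner_partner (a b : Fin (2 * m)) :
    partnerSign a * partnerSign b * eps m (partner a) (partner b) = eps m a b := by
  simp only [eps_apply, partner_inj]
  split_ifs with h
  · rw [h, partnerSign_partner]
    linear_combination partnerSign a * partnerSign_mul_self a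
  · rw [mul_zero]

theorem tensorPow_eps_apply {k : ℕ} (J L : Fin k → Fin (2 * m)) :
    tensorPow (2 * m) k (eps m) J L =
      if L = partner ∘ J then ∏ y, partnerSign (J y) else 0 := by
  simp [tensorPow, eps_apply, prod_ite_zero, funext_iff]

variable {l k : ℕ}

theorem raiseInputs_eps_apply (T : Tensor ℝ (Fin (l + k)) (Fin (2 * m)))
    (I : Fin l → Fin (2 * m)) (J : Fin k → Fin (2 * m)) :
    raiseInputs l k (eps m) T I J =
      (∏ y, partnerSign (J y)) * T (Fin.append I (partner ∘ J)) := by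
  simp [raiseInputs, tensorPow_transpose, Matrix.mul_apply, tensorPow_eps_apply,
    splitTensor_apply, mul_comm]

theorem append_comp_apply {B : Type*} (h : B → B) (I : Fin l → B) (J : Fin k → B)
    (x : Fin (l + k)) :
    Fin.append I (h ∘ J) x = if x.val < l then Fin.append I J x else h (Fin.append I J x) := by
  induction x using Fin.addCases with
  | left i => simp
  | right j => simp

theorem raiseInputs_eps_pairingTensor {f : Fin (l + k) → Fin (l + k)} (hf : IsPairing f univ) :
    raiseInputs l k (eps m) (pairingTensor (eps m) univ f) = Fmat m l k f := by
  ext I J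
  have hsign : ∏ y, partnerSign (J y) =
      ∏ x : Fin (l + k), if x.val < l then 1 else partnerSign (Fin.append I J x) := by
    simp [Fin.prod_univ_add]
  rw [raiseInputs_eps_apply, hsign, hf.prod_eq, pairingTensor, Finset.prod_apply,
    ← prod_mul_distrib, Fmat, Matrix.of_apply]
  refine prod_congr rfl fun x hx => ?_
  have hlt : x.val < (f x).val := (mem_filter.1 hx).2
  simp only [pairTensor, append_comp_apply]
  by_cases hxl : x.val < l <;> by_cases hfxl : (f x).val < l
  · simp [hxl, hfxl]
  · simp [hxl, hfxl, partnerSign_mul_eps_partner]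
  · omega
  · simp [hxl, hfxl, partnerSign_mul_partnerSign_mul_eps_partner_partner]

theorem matchingSpan_eps_le_comap_raiseInputs :
    matchingSpan (eps m) univ ≤ Submodule.comap (raiseInputs l k (eps m)) (Submodule.span ℝ
      {M | ∃ f : Fin (l + k) → Fin (l + k),
        (∀ x, f (f x) = x) ∧ (∀ x, f x ≠ x) ∧ M = Fmat m l k f}) := by
  rw [matchingSpan, Submodule.span_le]
  intro P hP
  obtain ⟨f, hf, hPf⟩ := hP.exists_pairingTensor (isSymplecticGram_eps m).transpose_eq
  have hinvol (x) : f (f x) = x := (hf x (mem_univ x)).2.1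
  have hfix (x) : f x ≠ x := (hf x (mem_univ x)).2.2
  rw [SetLike.mem_coe, Submodule.mem_comap]
  rcases hPf with rfl | rfl
  · rw [raiseInputs_eps_pairingTensor hf]
    exact Submodule.subset_span ⟨f, hinvol, hfix, rfl⟩
  · rw [map_neg, raiseInputs_eps_pairingTensor hf]
    exact neg_mem (Submodule.subset_span ⟨f, hinvol, hfix, rfl⟩)

end StandardForm

/-- every `Sp(n)`-equivariant linear map `(ℝⁿ)^{⊗k} → (ℝⁿ)^{⊗l}` (`n = 2m`)
lies in the `ℝ`-span of the maps `F_β`, `β` ranging over all perfect matchings of `[l+k]`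
(encoded by fixed-point-free involutions); i.e. the map from the free vector space on
perfect matchings to `Hom_{Sp(n)}` is surjective. -/
theorem Fmat_span (m k l : ℕ) (hm : 0 < m)
    (φ : Matrix (Fin l → Fin (2 * m)) (Fin k → Fin (2 * m)) ℝ)
    (hφ : ∀ g : Matrix (Fin (2 * m)) (Fin (2 * m)) ℝ, g.transpose * eps m * g = eps m →
      tensorPow (2 * m) l g * φ = φ * tensorPow (2 * m) k g) :
    φ ∈ Submodule.span ℝ
      {M : Matrix (Fin l → Fin (2 * m)) (Fin k → Fin (2 * m)) ℝ |
        ∃ f : Fin (l + k) → Fin (l + k),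
          (∀ x, f (f x) = x) ∧ (∀ x, f x ≠ x) ∧ M = Fmat m l k f} := by
  have hE := isSymplecticGram_eps m
  have hinvariant : lowerInputs (eps m) φ ∈ symplecticInvariants (eps m) univ :=
    hE.lowerInputs_mem_symplecticInvariants hφ
  rw [← hE.matchingSpan_eq_symplecticInvariants] at hinvariant
  rw [← hE.raiseInputs_lowerInputs φ]
  exact matchingSpan_eps_le_comap_raiseInputs hinvariant
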